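/- arXiv:1903.01121 — 6 statements merged into one kernel-verified Lean document; each statement's English description precedes it below -/
import Mathlib

section
/- Let A be a commutative Noetherian local ring with maximal ideal m, and let B be a commutative ring containing A as a subring that is finitely generated as an A-module. Write M = mB. Suppose there is an ideal b of A such that the image of b in B is an ideal of B (i.e., Bb ⊆ b) and the radical of b equals m. Suppose moreover that there exists n1 such that for all n ≥ n1, every f ∈ m^n satisfying f^j ∈ m^{nj+1} for some j ≥ 1 lies in m^{n+1} (no nonzero nilpotent classes in high-degree components of the associated graded ring, i.e. 'Proj G(A) is reduced'). Then there exists N such that for all n ≥ N the natural map ν_n : m^n/m^{n+1} → M^n/M^{n+1} is an isomorphism; explicitly, m^n ∩ M^{n+1} = m^{n+1} and m^n + M^{n+1} = M^n as A-submodules of B. -/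
open IsLocalRing Submodule

theorem aux_map (A B : Type*) [CommRing A] [CommRing B] [Algebra A B] (b : Ideal A)
    (hb : ∀ x : B, ∀ a ∈ b, x * algebraMap A B a ∈
      Submodule.map (Algebra.linearMap A B) (b : Submodule A A)) (I J : Ideal A) (hJ : J ≤ b)
    (x : B) (hx : x ∈ (I * J).map (algebraMap A B)) : ∃ a ∈ I, algebraMap A B a = x := by
  have key : ∀ c ∈ I * J, ∀ r : B, ∃ a ∈ I, algebraMap A B a = r * algebraMap A B c := by
    intro c hc
    refine Submodule.mul_induction_on hc ?_ ?_
    · intro i hi j hj r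
      obtain ⟨a, -, h⟩ := hb r j (hJ hj)
      have h' : algebraMap A B a = r * algebraMap A B j := h
      exact ⟨i * a, I.mul_mem_right _ hi, by rw [map_mul, map_mul, h']; ring⟩
    · intro x y h1 h2 r
      obtain ⟨a, ha, h⟩ := h1 r
      obtain ⟨a', ha', h'⟩ := h2 r
      exact ⟨a + a', I.add_mem ha ha', by rw [map_add, map_add, h, h']; ring⟩
  have main : ∀ r : B, ∃ a ∈ I, algebraMap A B a = r * x := by
    refine Submodule.span_induction (p := fun x _ => ∀ r : B, ∃ a ∈ I, algebraMap A B a = r * x)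
      ?_ ?_ ?_ ?_ hx
    · rintro _ ⟨c, hc, rfl⟩ r
      exact key c hc r
    · intro r
      exact ⟨0, I.zero_mem, by simp⟩
    · intro x y _ _ h1 h2 r
      obtain ⟨a, ha, h⟩ := h1 r
      obtain ⟨a', ha', h'⟩ := h2 r
      exact ⟨a + a', I.add_mem ha ha', by rw [map_add, h, h']; ring⟩
    · intro s x _ h1 r
      obtain ⟨a, ha, h⟩ := h1 (r * s)
      exact ⟨a, ha, by rw [h, smul_eq_mul]; ring⟩
  simpa using main 1

/-- If `A` is a Noetherian local ring, `B ⊇ A` a finite ring extension,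
`M = mB`, there is an ideal `b` of `A` whose image in `B` is an ideal of `B` with
`√b = m`, and the associated graded ring of `A` has no nonzero nilpotents in high
degrees, then `ν_n : m^n/m^{n+1} → M^n/M^{n+1}` is an isomorphism for `n >> 0`. -/
theorem stmt0 (A B : Type*) [CommRing A] [IsNoetherianRing A] [IsLocalRing A]
    [CommRing B] [Algebra A B]
    (hinj : Function.Injective (algebraMap A B)) [Module.Finite A B]
    (b : Ideal A)
    (hb : ∀ x : B, ∀ a ∈ b, x * algebraMap A B a ∈
      Submodule.map (Algebra.linearMap A B) (b : Submodule A A))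
    (hrad : b.radical = maximalIdeal A)
    (n1 : ℕ)
    (hred : ∀ n ≥ n1, ∀ f ∈ maximalIdeal A ^ n,
      (∃ j ≥ 1, f ^ j ∈ maximalIdeal A ^ (n * j + 1)) → f ∈ maximalIdeal A ^ (n + 1)) :
    ∃ N : ℕ, ∀ n ≥ N,
      Submodule.map (Algebra.linearMap A B) (maximalIdeal A ^ n : Ideal A) ⊓
          ((((maximalIdeal A).map (algebraMap A B)) ^ (n + 1)).restrictScalars A) =
        Submodule.map (Algebra.linearMap A B) (maximalIdeal A ^ (n + 1) : Ideal A) ∧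
      Submodule.map (Algebra.linearMap A B) (maximalIdeal A ^ n : Ideal A) ⊔
          ((((maximalIdeal A).map (algebraMap A B)) ^ (n + 1)).restrictScalars A) =
        (((maximalIdeal A).map (algebraMap A B)) ^ n).restrictScalars A := by
  obtain ⟨k, hk⟩ := Ideal.exists_radical_pow_le_of_fg b (IsNoetherian.noetherian _)
  rw [hrad] at hk
  set m := maximalIdeal A with hm
  have h1 : ∀ n, ∀ x ∈ (m.map (algebraMap A B)) ^ (n + k), ∃ a ∈ m ^ n, algebraMap A B a = x := by
    intro n x hx
    rw [← Ideal.map_pow, pow_add] at hx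
    exact aux_map A B b hb _ _ hk x hx
  have h2 : ∀ n ≥ n1 + k, Submodule.map (Algebra.linearMap A B) (m ^ n : Ideal A) =
      ((m.map (algebraMap A B)) ^ n).restrictScalars A := by
    intro n hn
    apply le_antisymm
    · rintro _ ⟨a, ha, rfl⟩
      rw [Submodule.restrictScalars_mem, ← Ideal.map_pow]
      exact Ideal.mem_map_of_mem _ ha
    · intro x hx
      rw [Submodule.restrictScalars_mem] at hx
      obtain ⟨f, hf, rfl⟩ := h1 (n - k) x (by rwa [Nat.sub_add_cancel (by omega)])
      refine ⟨f, ?_, rfl⟩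
      have step : ∀ d, n - k + d ≤ n → f ∈ m ^ (n - k + d) := by
        intro d
        induction d with
        | zero => intro _; exact hf
        | succ d ih =>
          intro hd
          refine hred (n - k + d) (by omega) f (ih (by omega)) ⟨k + 1, by omega, ?_⟩
          have hp := Ideal.pow_mem_pow hx (k + 1)
          rw [← pow_mul] at hp
          have hle : (n - k + d) * (k + 1) + 1 + k ≤ n * (k + 1) := by
            have : (n - k + d + 1) * (k + 1) ≤ n * (k + 1) := Nat.mul_le_mul_right _ (by omega)
            linarith
          obtain ⟨a, ha, h⟩ := h1 _ _ (Ideal.pow_le_pow_right hle hp)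
          rw [← map_pow] at h
          rwa [← hinj h]
      have := step k (by omega)
      rw [Nat.sub_add_cancel (by omega)] at this
      exact this
  refine ⟨n1 + k, fun n hn => ?_⟩
  rw [h2 n hn, h2 (n + 1) (by omega)]
  have h3 : ((m.map (algebraMap A B)) ^ (n + 1)).restrictScalars A ≤
      ((m.map (algebraMap A B)) ^ n).restrictScalars A := fun x hx =>
    Ideal.pow_le_pow_right (Nat.le_succ n) hx
  exact ⟨inf_eq_right.mpr h3, sup_eq_left.mpr h3⟩
end

section
/- Let A be a commutative Noetherian local ring with maximal ideal m, and let B be a commutative ring containing A as a subring that is finitely generated as an A-module. Write M = mB. Suppose there is an ideal b of A such that the image of b in B is an ideal of B (Bb ⊆ b) and the radical of b equals m, and suppose there exists n1 such that for all n ≥ n1, every f ∈ m^n satisfying f^j ∈ m^{nj+1} for some j ≥ 1 lies in m^{n+1}. Then there exists N such that for all n ≥ N one has m^n = M^n; that is, the image of m^n in B equals the ideal (mB)^n. -/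
open IsLocalRing Submodule

/-- Under the same hypotheses as Statement 0 (Noetherian local `A`,
finite extension `B`, conductor-like ideal `b` with `√b = m`, no nonzero nilpotents
in high degrees of `G(A)`), one has `m^n = M^n` (image of `m^n` in `B` equals
`(mB)^n`) for `n >> 0`. -/
theorem stmt1 (A B : Type*) [CommRing A] [IsNoetherianRing A] [IsLocalRing A]
    [CommRing B] [Algebra A B]
    (hinj : Function.Injective (algebraMap A B)) [Module.Finite A B]
    (b : Ideal A)
    (hb : ∀ x : B, ∀ a ∈ b, x * algebraMap A B a ∈
      Submodule.map (Algebra.linearMap A B) (b : Submodule A A))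
    (hrad : b.radical = maximalIdeal A)
    (n1 : ℕ)
    (hred : ∀ n ≥ n1, ∀ f ∈ maximalIdeal A ^ n,
      (∃ j ≥ 1, f ^ j ∈ maximalIdeal A ^ (n * j + 1)) → f ∈ maximalIdeal A ^ (n + 1)) :
    ∃ N : ℕ, ∀ n ≥ N,
      Submodule.map (Algebra.linearMap A B) (maximalIdeal A ^ n : Ideal A) =
        (((maximalIdeal A).map (algebraMap A B)) ^ n).restrictScalars A := by
  classical
  set m := maximalIdeal A with hm
  obtain ⟨c, hc⟩ : ∃ c, m ^ c ≤ b := by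
    have := Ideal.exists_radical_pow_le_of_fg b (IsNoetherian.noetherian _)
    rwa [hrad] at this
  have key : ∀ n, ∀ y ∈ (m.map (algebraMap A B)) ^ (n + c), ∃ a ∈ m ^ n, algebraMap A B a = y := by
    intro n y hy
    rw [← Ideal.map_pow] at hy
    have h1 : ∀ a ∈ m ^ (n + c), ∀ x : B, ∃ a' ∈ m ^ n, algebraMap A B a' = x * algebraMap A B a := by
      intro a ha
      rw [pow_add] at ha
      refine Submodule.mul_induction_on ha ?_ ?_
      · intro p hp q hq x
        obtain ⟨q', _, hq'⟩ := hb x q (hc hq)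
        refine ⟨p * q', Ideal.mul_mem_right _ _ hp, ?_⟩
        have hq2 : algebraMap A B q' = x * algebraMap A B q := hq'
        rw [map_mul, hq2, map_mul]
        ring
      · intro u v hu hv x
        obtain ⟨u', hu1, hu2⟩ := hu x
        obtain ⟨v', hv1, hv2⟩ := hv x
        refine ⟨u' + v', add_mem hu1 hv1, ?_⟩
        rw [map_add, map_add, hu2, hv2, mul_add]
    refine Submodule.span_induction (p := fun y _ => ∀ x : B, ∃ a' ∈ m ^ n, algebraMap A B a' = x * y)
      ?_ ?_ ?_ ?_ hy 1 |>.imp (fun a h => ⟨h.1, by rw [h.2, one_mul]⟩)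
    · rintro _ ⟨a, ha, rfl⟩ x
      exact h1 a ha x
    · intro x
      exact ⟨0, zero_mem _, by simp⟩
    · intro u v _ _ hu hv x
      obtain ⟨u', hu1, hu2⟩ := hu x
      obtain ⟨v', hv1, hv2⟩ := hv x
      exact ⟨u' + v', add_mem hu1 hv1, by rw [map_add, hu2, hv2, mul_add]⟩
    · intro r u _ hu x
      obtain ⟨u', hu1, hu2⟩ := hu (x * r)
      exact ⟨u', hu1, by rw [hu2, smul_eq_mul, mul_assoc]⟩
  refine ⟨n1 + c, fun n hn => le_antisymm ?_ ?_⟩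
  · rintro _ ⟨a, ha, rfl⟩
    change algebraMap A B a ∈ (m.map (algebraMap A B)) ^ n
    rw [← Ideal.map_pow]
    exact Ideal.mem_map_of_mem _ ha
  · intro y hy
    change y ∈ (m.map (algebraMap A B)) ^ n at hy
    obtain ⟨k, rfl⟩ : ∃ k, n = k + c := ⟨n - c, by omega⟩
    obtain ⟨f, hf, rfl⟩ := key k y hy
    have step : ∀ i ≤ c, f ∈ m ^ (k + i) := by
      intro i
      induction i with
      | zero => intro _; exact hf
      | succ i ih =>
        intro hi
        refine hred (k + i) (by omega) f (ih (by omega)) ⟨c + 1, by omega, ?_⟩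
        have h2 := Ideal.pow_mem_pow hy (c + 1)
        have e : (m.map (algebraMap A B) ^ (k + c)) ^ (c + 1)
            = m.map (algebraMap A B) ^ (((k + c) * c + k) + c) := by
          rw [← pow_mul]; congr 1; ring
        rw [e] at h2
        obtain ⟨g, hg, hg2⟩ := key _ _ h2
        rw [← map_pow] at hg2
        rw [← hinj hg2]
        refine Ideal.pow_le_pow_right ?_ hg
        obtain ⟨d, rfl⟩ : ∃ d, c = i + 1 + d := ⟨c - (i + 1), by omega⟩
        nlinarith [Nat.zero_le (d * (i + 1 + d))]
    exact ⟨f, step c le_rfl, rfl⟩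
end

section
/- Let A be a commutative local ring with maximal ideal m, and let B be a commutative ring containing A as a subring. Write M = mB, and suppose n0 ≥ 1 is such that M^{n0} is contained in the image of m in B. Then for every n ≥ 0 and every f ∈ m^n whose image in B lies in M^{n+1}, one has f^{n0} ∈ m^{n·n0 + 1}. In particular, the class of f in the degree-n component m^n/m^{n+1} of the associated graded ring G(A) is nilpotent. -/
open IsLocalRing Submodule

/-- `A` local, `B ⊇ A`, `M = mB`, and `n0 ≥ 1` with `M^{n0}` contained
in the image of `m` in `B`. Then for every `n` and every `f ∈ m^n` whose image in
`B` lies in `M^{n+1}`, one has `f^{n0} ∈ m^{n·n0+1}`; in particular the class of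
`f` in the degree-`n` component of `G(A)` is nilpotent. -/
theorem stmt4 (A B : Type*) [CommRing A] [IsLocalRing A]
    [CommRing B] [Algebra A B]
    (hinj : Function.Injective (algebraMap A B))
    (n0 : ℕ) (hn0 : 1 ≤ n0)
    (h : (((maximalIdeal A).map (algebraMap A B)) ^ n0).restrictScalars A ≤
      Submodule.map (Algebra.linearMap A B) (maximalIdeal A : Submodule A A)) :
    ∀ n : ℕ, ∀ f ∈ maximalIdeal A ^ n,
      algebraMap A B f ∈ ((maximalIdeal A).map (algebraMap A B)) ^ (n + 1) →
        f ^ n0 ∈ maximalIdeal A ^ (n * n0 + 1) ∧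
          ∃ j ≥ 1, f ^ j ∈ maximalIdeal A ^ (n * j + 1) := by
  have key : ∀ k : ℕ, ∀ x ∈ ((maximalIdeal A).map (algebraMap A B)) ^ (k + n0),
      ∃ a ∈ maximalIdeal A ^ (k + 1), algebraMap A B a = x := by
    intro k x hx
    rw [pow_add, ← Ideal.map_pow] at hx
    refine Submodule.mul_induction_on hx ?_ ?_
    · intro u hu
      refine Submodule.span_induction
        (p := fun u _ => ∀ v ∈ ((maximalIdeal A).map (algebraMap A B)) ^ n0,
          ∃ a ∈ maximalIdeal A ^ (k + 1), algebraMap A B a = u * v) ?_ ?_ ?_ ?_ hu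
      · rintro _ ⟨a, ha, rfl⟩ v hv
        obtain ⟨b, hb, hbv⟩ := h hv
        refine ⟨a * b, ?_, ?_⟩
        · rw [pow_succ]
          exact Ideal.mul_mem_mul ha hb
        · rw [map_mul, ← hbv]
          rfl
      · intro v _
        exact ⟨0, Ideal.zero_mem _, by simp⟩
      · intro x y _ _ hx hy v hv
        obtain ⟨a, ha, hav⟩ := hx v hv
        obtain ⟨b, hb, hbv⟩ := hy v hv
        exact ⟨a + b, Ideal.add_mem _ ha hb, by rw [map_add, hav, hbv, add_mul]⟩
      · intro c x _ hx v hv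
        obtain ⟨a, ha, hav⟩ := hx (c * v) (Ideal.mul_mem_left _ c hv)
        exact ⟨a, ha, by rw [hav, smul_eq_mul]; ring⟩
    · rintro _ _ ⟨a, ha, rfl⟩ ⟨b, hb, rfl⟩
      exact ⟨a + b, Ideal.add_mem _ ha hb, map_add _ _ _⟩
  intro n f _ hf
  have main : f ^ n0 ∈ maximalIdeal A ^ (n * n0 + 1) := by
    have h1 := Ideal.pow_mem_pow hf n0
    rw [← pow_mul, add_mul, one_mul, ← map_pow] at h1
    obtain ⟨a, ha, hax⟩ := key _ _ h1
    rwa [← hinj hax]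
  exact ⟨main, n0, hn0, main⟩
end

section
/- Let A be a commutative local ring with maximal ideal m, and let B be a commutative ring containing A as a subring. Write M = mB, and suppose n0 ≥ 1 is such that M^{n0} is contained in the image of m in B. Suppose moreover that there exists n1 such that for all n ≥ n1, every f ∈ m^n satisfying f^j ∈ m^{nj+1} for some j ≥ 1 lies in m^{n+1}. Then for all n ≥ n1 the natural map ν_n : m^n/m^{n+1} → M^n/M^{n+1} is injective; explicitly, m^n ∩ M^{n+1} = m^{n+1} as A-submodules of B. -/
open IsLocalRing Submodule

/-- `A` local, `B ⊇ A`, `M = mB`, `n0 ≥ 1` with `M^{n0}` contained in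
the image of `m`, and no nonzero nilpotent classes in components of degree `≥ n1`
of `G(A)`. Then for every `n ≥ n1`, `ν_n` is injective, i.e.
`m^n ∩ M^{n+1} = m^{n+1}` as `A`-submodules of `B`. -/
theorem stmt5 (A B : Type*) [CommRing A] [IsLocalRing A]
    [CommRing B] [Algebra A B]
    (hinj : Function.Injective (algebraMap A B))
    (n0 : ℕ) (hn0 : 1 ≤ n0)
    (h : (((maximalIdeal A).map (algebraMap A B)) ^ n0).restrictScalars A ≤
      Submodule.map (Algebra.linearMap A B) (maximalIdeal A : Submodule A A))
    (n1 : ℕ)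
    (hred : ∀ n ≥ n1, ∀ f ∈ maximalIdeal A ^ n,
      (∃ j ≥ 1, f ^ j ∈ maximalIdeal A ^ (n * j + 1)) → f ∈ maximalIdeal A ^ (n + 1)) :
    ∀ n ≥ n1,
      Submodule.map (Algebra.linearMap A B) (maximalIdeal A ^ n : Ideal A) ⊓
          ((((maximalIdeal A).map (algebraMap A B)) ^ (n + 1)).restrictScalars A) =
        Submodule.map (Algebra.linearMap A B) (maximalIdeal A ^ (n + 1) : Ideal A) := by
  have key : ∀ k : ℕ, (((maximalIdeal A).map (algebraMap A B)) ^ (k + n0)).restrictScalars A ≤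
      Submodule.map (Algebra.linearMap A B) (maximalIdeal A ^ (k + 1) : Ideal A) := by
    intro k
    have e : (((maximalIdeal A).map (algebraMap A B)) ^ (k + n0)) =
        (maximalIdeal A ^ k).map (algebraMap A B) •
          (((maximalIdeal A).map (algebraMap A B)) ^ n0) := by
      rw [pow_add, Ideal.map_pow, smul_eq_mul]
    rw [e, Ideal.smul_restrictScalars, pow_succ, ← smul_eq_mul (maximalIdeal A ^ k),
      Submodule.map_smul'']
    exact Submodule.smul_mono le_rfl h
  intro n hn
  apply le_antisymm
  · rintro x ⟨⟨f, hf, rfl⟩, hx⟩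
    refine ⟨f, hred n hn f hf ⟨n0, hn0, ?_⟩, rfl⟩
    have h1 := Ideal.pow_mem_pow (show algebraMap A B f ∈ _ from hx) n0
    rw [← pow_mul, add_mul, one_mul, ← map_pow] at h1
    obtain ⟨g, hg, hge⟩ := key (n * n0) h1
    have : g = f ^ n0 := hinj hge
    exact this ▸ hg
  · rintro x ⟨f, hf, rfl⟩
    refine ⟨⟨f, Ideal.pow_le_pow_right (Nat.le_succ n) hf, rfl⟩, ?_⟩
    change algebraMap A B f ∈ ((maximalIdeal A).map (algebraMap A B)) ^ (n + 1)
    rw [← Ideal.map_pow]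
    exact Ideal.mem_map_of_mem _ hf
end

section
/- Let A be a commutative Noetherian local ring with maximal ideal m and residue field k = A/m, and let B be a commutative ring containing A as a subring that is finitely generated as an A-module. Write M = mB, and suppose n0 ≥ 1 is such that M^{n0} is contained in the image of m in B. Then for every n ≥ n0, the length of the A-module M^{n0}/M^n is at most the length of the A-module m/m^n; equivalently, ∑_{i=n0}^{n-1} dim_k(M^i/M^{i+1}) ≤ ∑_{i=1}^{n-1} dim_k(m^i/m^{i+1}). -/
open IsLocalRing Submodule

section helpers

variable {A : Type*} [CommRing A] {E F : Type*} [AddCommGroup E] [Module A E]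
  [AddCommGroup F] [Module A F]

theorem aux_add {P Q R : Submodule A E} (hPQ : P ≤ Q) (hQR : Q ≤ R) :
    Module.length A (R ⧸ P.submoduleOf R) =
      Module.length A (Q ⧸ P.submoduleOf Q) + Module.length A (R ⧸ Q.submoduleOf R) := by
  have h1 : P.submoduleOf Q ≤ (P.submoduleOf R).comap (Submodule.inclusion hQR) := by
    intro x hx; exact hx
  have h2 : P.submoduleOf R ≤ Q.submoduleOf R := fun x hx => hPQ hx
  refine Module.length_eq_add_of_exact
    (Submodule.mapQ (P.submoduleOf Q) (P.submoduleOf R) (Submodule.inclusion hQR) h1)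
    (Submodule.factor h2) ?_ (Submodule.factor_surjective h2) ?_
  · rw [← LinearMap.ker_eq_bot]
    refine Submodule.ker_liftQ_eq_bot _ _ _ ?_
    intro x hx
    rw [LinearMap.mem_ker, LinearMap.comp_apply, Submodule.mkQ_apply,
      Submodule.Quotient.mk_eq_zero] at hx
    exact hx
  · intro y
    obtain ⟨y, rfl⟩ := Submodule.Quotient.mk_surjective _ y
    constructor
    · intro hy
      have hy' : (Submodule.Quotient.mk y : R ⧸ Q.submoduleOf R) = 0 := hy
      rw [Submodule.Quotient.mk_eq_zero] at hy'
      exact ⟨Submodule.Quotient.mk ⟨y.1, hy'⟩, rfl⟩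
    · rintro ⟨x, hx⟩
      obtain ⟨x, rfl⟩ := Submodule.Quotient.mk_surjective _ x
      rw [← hx]
      change (Submodule.Quotient.mk (Submodule.inclusion hQR x) : R ⧸ Q.submoduleOf R) = 0
      rw [Submodule.Quotient.mk_eq_zero]
      exact x.2

theorem aux_smul (I : Ideal A) (Q : Submodule A E) :
    I • (⊤ : Submodule A Q) = (I • Q).submoduleOf Q := by
  apply Submodule.map_injective_of_injective Q.subtype_injective
  rw [Submodule.map_smul'', Submodule.map_top, Submodule.range_subtype, Submodule.submoduleOf,
    Submodule.map_comap_subtype, inf_eq_right.mpr Submodule.smul_le_right]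

theorem aux_finrank [IsLocalRing A] (Q : Submodule A E) [Module.Finite A Q] :
    (Module.finrank (A ⧸ maximalIdeal A) (Q ⧸ (maximalIdeal A • (⊤ : Submodule A Q))) : ℕ∞) =
      Module.length A (Q ⧸ (maximalIdeal A • Q).submoduleOf Q) := by
  rw [← aux_smul]
  letI : Field (A ⧸ maximalIdeal A) := Ideal.Quotient.field _
  rw [Module.length_eq_of_surjective (R := A ⧸ maximalIdeal A) Ideal.Quotient.mk_surjective]
  haveI : Module.Finite (A ⧸ maximalIdeal A) (Q ⧸ (maximalIdeal A • (⊤ : Submodule A Q))) :=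
    Module.Finite.of_restrictScalars_finite A _ _
  exact (Module.length_eq_finrank _ _).symm

theorem aux_sum [IsLocalRing A] (Q : ℕ → Submodule A E) [∀ i, Module.Finite A (Q i)]
    (hQ : ∀ i, Q (i + 1) = maximalIdeal A • Q i) (a b : ℕ) (hab : a ≤ b) :
    ((∑ i ∈ Finset.Ico a b, Module.finrank (A ⧸ maximalIdeal A)
      (Q i ⧸ (maximalIdeal A • (⊤ : Submodule A (Q i)))) : ℕ) : ℕ∞) =
      Module.length A (Q a ⧸ (Q b).submoduleOf (Q a)) := by
  have hanti : Antitone Q := antitone_nat_of_succ_le fun i => by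
    rw [hQ]; exact Submodule.smul_le_right
  induction b, hab using Nat.le_induction with
  | base =>
    rw [Finset.Ico_self, Finset.sum_empty, Submodule.submoduleOf_self, Nat.cast_zero, eq_comm,
      Module.length_eq_zero_iff]
    exact Submodule.Quotient.subsingleton_iff.mpr rfl
  | succ b hab ih =>
    rw [Finset.sum_Ico_succ_top hab, Nat.cast_add, ih, aux_finrank, ← hQ, add_comm,
      ← aux_add (hanti (Nat.le_succ b)) (hanti hab)]

theorem aux_main (f : E →ₗ[A] F) {P Q : Submodule A E} {P' Q' : Submodule A F}
    (h1 : P.map f ≤ P') (h2 : Q' ≤ Q.map f) (hPQ : P ≤ Q) (h3 : P' ≤ Q') :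
    Module.length A (Q' ⧸ P'.submoduleOf Q') ≤ Module.length A (Q ⧸ P.submoduleOf Q) := by
  have hPJ : P ≤ Q ⊓ Q'.comap f :=
    le_inf hPQ (Submodule.map_le_iff_le_comap.mp (h1.trans h3))
  rw [aux_add hPJ inf_le_left]
  refine le_trans ?_ le_self_add
  let g : (Q ⊓ Q'.comap f : Submodule A E) →ₗ[A] Q' := f.restrict (fun x hx => hx.2)
  have hg : P.submoduleOf (Q ⊓ Q'.comap f) ≤ (P'.submoduleOf Q').comap g :=
    fun x hx => h1 (Submodule.mem_map_of_mem hx)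
  refine Module.length_le_of_surjective (Submodule.mapQ _ _ g hg) ?_
  intro y
  obtain ⟨⟨y, hy⟩, rfl⟩ := Submodule.Quotient.mk_surjective _ y
  obtain ⟨x, hx, rfl⟩ := h2 hy
  exact ⟨Submodule.Quotient.mk ⟨x, hx, hy⟩, rfl⟩

end helpers

/-- `A` Noetherian local with residue field `k = A/m`, `B ⊇ A` finite,
`M = mB`, and `n0 ≥ 1` with `M^{n0}` contained in the image of `m` in `B`. Then for
every `n ≥ n0`, the length of `M^{n0}/M^n` is at most the length of `m/m^n`;
equivalently `∑_{i=n0}^{n-1} dim_k (M^i/M^{i+1}) ≤ ∑_{i=1}^{n-1} dim_k (m^i/m^{i+1})`. -/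
theorem stmt7 (A B : Type*) [CommRing A] [IsNoetherianRing A] [IsLocalRing A]
    [CommRing B] [Algebra A B]
    (hinj : Function.Injective (algebraMap A B)) [Module.Finite A B]
    (n0 : ℕ) (hn0 : 1 ≤ n0)
    (h : (((maximalIdeal A).map (algebraMap A B)) ^ n0).restrictScalars A ≤
      Submodule.map (Algebra.linearMap A B) (maximalIdeal A : Submodule A A)) :
    ∀ n ≥ n0,
      (∑ i ∈ Finset.Ico n0 n,
          Module.finrank (A ⧸ maximalIdeal A)
            (((((maximalIdeal A).map (algebraMap A B)) ^ i).restrictScalars A) ⧸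
              ((maximalIdeal A) • (⊤ : Submodule A
                ((((maximalIdeal A).map (algebraMap A B)) ^ i).restrictScalars A))))) ≤
      ∑ i ∈ Finset.Ico 1 n,
          Module.finrank (A ⧸ maximalIdeal A)
            ((maximalIdeal A ^ i : Ideal A) ⧸
              ((maximalIdeal A) • (⊤ : Submodule A (maximalIdeal A ^ i : Ideal A)))) := by
  intro n hn
  have : IsNoetherian A B := isNoetherian_of_isNoetherianRing_of_finite A B
  let Q : ℕ → Submodule A B := fun i =>
    (((maximalIdeal A).map (algebraMap A B)) ^ i).restrictScalars A
  let R : ℕ → Submodule A A := fun i => (maximalIdeal A ^ i : Ideal A)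
  have hQ : ∀ i, Q (i + 1) = maximalIdeal A • Q i := fun i => by
    simp only [Q]
    rw [pow_succ', ← smul_eq_mul, Ideal.smul_restrictScalars]
  have hR : ∀ i, R (i + 1) = maximalIdeal A • R i := fun i => by
    simp only [R]
    rw [pow_succ', smul_eq_mul]
  have e1 := aux_sum Q hQ n0 n hn
  have e2 := aux_sum R hR 1 n (hn0.trans hn)
  have key : Module.length A (Q n0 ⧸ (Q n).submoduleOf (Q n0)) ≤
      Module.length A (R 1 ⧸ (R n).submoduleOf (R 1)) := by
    refine aux_main (Algebra.linearMap A B) ?_ ?_ ?_ ?_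
    · rintro _ ⟨x, hx, rfl⟩
      change algebraMap A B x ∈ (maximalIdeal A).map (algebraMap A B) ^ n
      rw [← Ideal.map_pow]
      exact Ideal.mem_map_of_mem _ hx
    · simpa only [Q, R, pow_one] using h
    · exact Ideal.pow_le_pow_right (hn0.trans hn)
    · exact Ideal.pow_le_pow_right (I := (maximalIdeal A).map (algebraMap A B)) hn
  rw [← e1, ← e2] at key
  exact_mod_cast key
end

section
/- Let A be a commutative Noetherian local ring with maximal ideal m and residue field k = A/m, and let B be a commutative ring containing A as a subring that is finitely generated as an A-module. Write M = mB. Suppose n0 ≥ 1 is such that M^{n0} is contained in the image of m in B, and suppose n1 is such that for all n ≥ n1 the natural map ν_n : m^n/m^{n+1} → M^n/M^{n+1} is injective (i.e., m^n ∩ M^{n+1} = m^{n+1}). Then there exists N such that for all n ≥ N the map ν_n is an isomorphism; explicitly, m^n + M^{n+1} = M^n as A-submodules of B. -/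
open IsLocalRing Submodule

/-- `A` Noetherian local, `B ⊇ A` finite, `M = mB`, `n0 ≥ 1` with
`M^{n0}` contained in the image of `m` in `B`, and `n1` such that `ν_n` is
injective (`m^n ∩ M^{n+1} = m^{n+1}`) for all `n ≥ n1`. Then there is `N` such
that for all `n ≥ N` the map `ν_n` is an isomorphism; explicitly
`m^n ∩ M^{n+1} = m^{n+1}` and `m^n + M^{n+1} = M^n` as `A`-submodules of `B`. -/
theorem stmt8 (A B : Type*) [CommRing A] [IsNoetherianRing A] [IsLocalRing A]
    [CommRing B] [Algebra A B]
    (hinj : Function.Injective (algebraMap A B)) [Module.Finite A B]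
    (n0 : ℕ) (hn0 : 1 ≤ n0)
    (h : (((maximalIdeal A).map (algebraMap A B)) ^ n0).restrictScalars A ≤
      Submodule.map (Algebra.linearMap A B) (maximalIdeal A : Submodule A A))
    (n1 : ℕ)
    (hinjn : ∀ n ≥ n1,
      Submodule.map (Algebra.linearMap A B) (maximalIdeal A ^ n : Ideal A) ⊓
          ((((maximalIdeal A).map (algebraMap A B)) ^ (n + 1)).restrictScalars A) =
        Submodule.map (Algebra.linearMap A B) (maximalIdeal A ^ (n + 1) : Ideal A)) :
    ∃ N : ℕ, ∀ n ≥ N,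
      Submodule.map (Algebra.linearMap A B) (maximalIdeal A ^ n : Ideal A) ⊓
          ((((maximalIdeal A).map (algebraMap A B)) ^ (n + 1)).restrictScalars A) =
        Submodule.map (Algebra.linearMap A B) (maximalIdeal A ^ (n + 1) : Ideal A) ∧
      Submodule.map (Algebra.linearMap A B) (maximalIdeal A ^ n : Ideal A) ⊔
          ((((maximalIdeal A).map (algebraMap A B)) ^ (n + 1)).restrictScalars A) =
        (((maximalIdeal A).map (algebraMap A B)) ^ n).restrictScalars A := by
  set m := maximalIdeal A with hm
  set M := m.map (algebraMap A B) with hM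
  have key1 : ∀ j : ℕ, (M ^ (n0 + j)).restrictScalars A ≤
      Submodule.map (Algebra.linearMap A B) (m ^ (j + 1) : Ideal A) := by
    intro j
    induction j with
    | zero => simpa using h
    | succ j ih =>
      have e : (M ^ (n0 + (j + 1))).restrictScalars A
          = m • (M ^ (n0 + j)).restrictScalars A := by
        rw [← Ideal.smul_restrictScalars, smul_eq_mul, ← pow_succ', add_assoc]
      rw [e, pow_succ' m (j + 1), ← smul_eq_mul, Submodule.map_smul'']
      exact Submodule.smul_mono le_rfl ih
  have mle : ∀ n : ℕ, Submodule.map (Algebra.linearMap A B) (m ^ n : Ideal A) ≤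
      (M ^ n).restrictScalars A := by
    rintro n _ ⟨x, hx, rfl⟩
    change algebraMap A B x ∈ M ^ n
    rw [hM, ← Ideal.map_pow]
    exact Ideal.mem_map_of_mem _ hx
  have key2 : ∀ j : ℕ, Submodule.map (Algebra.linearMap A B) (m ^ n1 : Ideal A) ⊓
      (M ^ (n1 + j)).restrictScalars A ≤
      Submodule.map (Algebra.linearMap A B) (m ^ (n1 + j) : Ideal A) := by
    intro j
    induction j with
    | zero => exact inf_le_left
    | succ j ih =>
      rintro x ⟨hx1, hx2⟩
      have hx3 := ih ⟨hx1, (Ideal.pow_le_pow_right (by omega) hx2 : x ∈ M ^ (n1 + j))⟩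
      have := hinjn (n1 + j) (by omega)
      rw [← add_assoc, ← this]
      exact ⟨hx3, hx2⟩
  refine ⟨n0 + n1, fun n hn => ⟨hinjn n (by omega), ?_⟩⟩
  apply le_antisymm
  · refine sup_le (mle n) ?_
    intro x hx
    exact (Ideal.pow_le_pow_right (Nat.le_succ n) hx : x ∈ M ^ n)
  · refine le_trans ?_ le_sup_left
    intro x hx
    obtain ⟨j, rfl⟩ := Nat.exists_eq_add_of_le (show n1 ≤ n by omega)
    refine key2 j ⟨?_, hx⟩
    have h1 := key1 n1 (Ideal.pow_le_pow_right hn hx : x ∈ M ^ (n0 + n1))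
    exact Submodule.map_mono (Ideal.pow_le_pow_right (Nat.le_succ n1)) h1
end
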